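/- Let σ ∈ S_n, X ∈ ℂ^n, and T(L) = T_σ(X). Let 1 ≤ r < s ≤ n with A_σ(s,r) = 1, and let i_r, i_{r+1}, …, i_{s−1} be integers with 1 ≤ i_t ≤ t for each r ≤ t ≤ s−1. Then the array L' obtained from T_σ(X) by adding 1 to each entry (t, i_t) for r ≤ t ≤ s−1 does not satisfy the graph G_σ; that is, there exist 1 ≤ i < k ≤ n such that either A_σ(k,i) = 1 and l'_{k,i} − l'_{k−1,i} ∉ ℤ_{≥0}, or A_σ(k,i) = −1 and l'_{k−1,i} − l'_{k,i} ∉ ℤ_{>0}. -/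

import Mathlib

/-- The orientation function `A_σ` of the graph `G_σ`:
`A_σ(r,s) = 1` if `σ⁻¹(r) > σ⁻¹(s)` and `A_σ(r,s) = -1` otherwise. -/
def Aperm (σ : Equiv.Perm ℕ) (r s : ℕ) : ℤ :=
  if σ.symm s < σ.symm r then 1 else -1

/-- The Gelfand–Tsetlin tableau `T_σ(X)`: `tab n σ x k i` is the entry `y_{k,i}` in
row `k`, column `i`; row `n` is `x` and `y_{k-1,i} = y_{k,i} + (1 - A_σ(k,i))/2`. -/
noncomputable def tab (n : ℕ) (σ : Equiv.Perm ℕ) (x : ℕ → ℂ) (k i : ℕ) : ℂ :=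
  if h : n ≤ k then x i
  else tab n σ x (k + 1) i + (1 - (Aperm σ (k + 1) i : ℂ)) / 2
termination_by n - k
decreasing_by omega

/-- The array obtained from `T_σ(X)` by adding `ε` to the entry `(t, idx t)` for each
`r ≤ t ≤ s - 1`. -/
noncomputable def shiftedTab (n : ℕ) (σ : Equiv.Perm ℕ) (x : ℕ → ℂ) (r s : ℕ)
    (idx : ℕ → ℕ) (ε : ℂ) (k i : ℕ) : ℂ :=
  tab n σ x k i + if r ≤ k ∧ k ≤ s - 1 ∧ i = idx k then ε else 0

/-- if `A_σ(s,r) = 1`, the tableau obtained from `T_σ(X)` by adding `1`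
to the entries `(t, i_t)`, `r ≤ t ≤ s-1`, does not satisfy `G_σ`. -/
theorem stmt9 (n : ℕ) (hn : 2 ≤ n) (σ : Equiv.Perm ℕ)
    (hσ : ∀ i ∉ Set.Icc 1 n, σ i = i) (x : ℕ → ℂ) (r s : ℕ)
    (hr : 1 ≤ r) (hrs : r < s) (hs : s ≤ n) (hA : Aperm σ s r = 1)
    (idx : ℕ → ℕ) (hidx : ∀ t : ℕ, r ≤ t → t ≤ s - 1 → 1 ≤ idx t ∧ idx t ≤ t) :
    ∃ i k : ℕ, 1 ≤ i ∧ i < k ∧ k ≤ n ∧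
      ((Aperm σ k i = 1 ∧
          ¬∃ m : ℕ, shiftedTab n σ x r s idx 1 k i -
              shiftedTab n σ x r s idx 1 (k - 1) i = (m : ℂ)) ∨
       (Aperm σ k i = -1 ∧
          ¬∃ m : ℕ, shiftedTab n σ x r s idx 1 (k - 1) i -
              shiftedTab n σ x r s idx 1 k i = (m : ℂ) + 1)) := by
  by_contra hcon
  push Not at hcon
  have tabstep : ∀ i k : ℕ, i < k → k ≤ n → tab n σ x (k - 1) i =
      tab n σ x k i + (1 - (Aperm σ k i : ℂ)) / 2 := by
    intro i k hik hkn
    obtain ⟨j, rfl⟩ : ∃ j, k = j + 1 := ⟨k - 1, by omega⟩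
    rw [Nat.add_sub_cancel, tab, dif_neg (by omega)]
  have up : ∀ i k : ℕ, 1 ≤ i → i < k → k ≤ n → σ.symm i < σ.symm k →
      (r ≤ k - 1 ∧ k - 1 ≤ s - 1 ∧ i = idx (k - 1)) →
      (r ≤ k ∧ k ≤ s - 1 ∧ i = idx k) := by
    intro i k h1 h2 h3 hp hd
    by_contra hnd
    have hA1 : Aperm σ k i = 1 := by simp [Aperm, hp]
    obtain ⟨m, hm⟩ := (hcon i k h1 h2 h3).1 hA1
    rw [shiftedTab, shiftedTab, if_pos hd, if_neg hnd, tabstep i k h2 h3, hA1] at hm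
    have h0 : ((m + 1 : ℕ) : ℂ) = 0 := by
      push_cast at hm ⊢
      linear_combination -hm
    exact absurd (Nat.cast_eq_zero.mp h0) (by omega)
  have down : ∀ i k : ℕ, 1 ≤ i → i < k → k ≤ n → ¬ σ.symm i < σ.symm k →
      (r ≤ k ∧ k ≤ s - 1 ∧ i = idx k) →
      (r ≤ k - 1 ∧ k - 1 ≤ s - 1 ∧ i = idx (k - 1)) := by
    intro i k h1 h2 h3 hp hd
    by_contra hnd
    have hA1 : Aperm σ k i = -1 := by simp only [Aperm, if_neg hp]
    obtain ⟨m, hm⟩ := (hcon i k h1 h2 h3).2 hA1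
    rw [shiftedTab, shiftedTab, if_pos hd, if_neg hnd, tabstep i k h2 h3, hA1] at hm
    have h0 : ((m + 1 : ℕ) : ℂ) = 0 := by
      push_cast at hm ⊢
      linear_combination -hm
    exact absurd (Nat.cast_eq_zero.mp h0) (by omega)
  have hrs' : σ.symm r < σ.symm s := by
    by_contra h
    simp [Aperm, h] at hA
  have inj : ∀ a b : ℕ, a ≠ b → σ.symm a ≠ σ.symm b := fun a b h h' => h (σ.symm.injective h')
  have key : ∀ d t : ℕ, t + d = s - 1 → r ≤ t → σ.symm s < σ.symm (idx t) := by
    intro d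
    induction d with
    | zero =>
      intro t ht hrt
      obtain ⟨ha, hb⟩ := hidx t hrt (by omega)
      by_contra h
      have h2 := inj (idx t) s (by omega)
      have e : s - 1 = t := by omega
      have := up (idx t) s ha (by omega) hs (by omega)
        ⟨by omega, by omega, by rw [e]⟩
      omega
    | succ d ih =>
      intro t ht hrt
      have hi := ih (t + 1) (by omega) (by omega)
      obtain ⟨ha, hb⟩ := hidx t hrt (by omega)
      obtain ⟨ha', hb'⟩ := hidx (t + 1) (by omega) (by omega)
      by_cases hij : idx t = idx (t + 1)
      · rw [hij]; exact hi
      have h1 : ¬ σ.symm (idx t) < σ.symm (t + 1) := fun h =>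
        hij (up (idx t) (t + 1) ha (by omega) (by omega) h
          ⟨hrt, by omega, rfl⟩).2.2
      by_cases hit : idx (t + 1) = t + 1
      · rw [hit] at hi; omega
      have h2 : σ.symm (idx (t + 1)) < σ.symm (t + 1) := by
        by_contra h
        exact hij (down (idx (t + 1)) (t + 1) ha' (by omega) (by omega) h
          ⟨by omega, by omega, rfl⟩).2.2.symm
      omega
  have hk := key (s - 1 - r) r (by omega) le_rfl
  obtain ⟨ha, hb⟩ := hidx r le_rfl (by omega)
  by_cases h : idx r = r
  · rw [h] at hk; omega
  have := down (idx r) r ha (by omega) (by omega) (by omega) ⟨le_rfl, by omega, rfl⟩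
  omega
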